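/- Let 1 < p < q < γ, let Ω ⊂ ℝ^N be a bounded domain, a, b ∈ L^∞(Ω) with a ≥ 0, a ≢ 0, b ≥ σ_b > 0 a.e., and γ < p*. Define, for u ∈ W_0^{1,p}(Ω) with ∫a|u|^q > 0, the quotient Υ(u) = (∫a|u|^q)^{(γ-p)/(γ-q)} / (∫|∇u|^p · (∫b|u|^γ)^{(q-p)/(γ-q)}). Then 0 < sup Υ < ∞ over the admissible set. -/

import Mathlib

open MeasureTheory

lemma aux_holder {α : Type*} [MeasurableSpace α] {μ : Measure α} (s t : ℝ) (hst : s.HolderConjugate t)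
    (f g : α → ℝ) (hf0 : ∀ x, 0 ≤ f x) (hg0 : ∀ x, 0 ≤ g x)
    (hf : MemLp f (ENNReal.ofReal s) μ) (hg : MemLp g (ENNReal.ofReal t) μ) :
    ∫ x, f x * g x ∂μ ≤ (∫ x, f x ^ s ∂μ) ^ (1 / s) * (∫ x, g x ^ t ∂μ) ^ (1 / t) :=
  integral_mul_le_Lp_mul_Lq_of_nonneg hst (Filter.Eventually.of_forall hf0)
    (Filter.Eventually.of_forall hg0) hf hg

lemma aux_poincare {N : ℕ} (hN : 1 ≤ N) (p R : ℝ) (hp : 1 < p) (hR : 0 < R)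
    (u : EuclideanSpace ℝ (Fin N) → ℝ) (hu : ContDiff ℝ 1 u) (hc : HasCompactSupport u)
    (hs : ∀ x, u x ≠ 0 → ‖x‖ ≤ R) :
    ∫ x, |u x| ^ p ≤ (p * R) ^ p * ∫ x, ‖gradient u x‖ ^ p := by
  have hp0 : 0 < p := by linarith
  have hp1 : 0 < p - 1 := by linarith
  have hgn : ∀ x, ‖gradient u x‖ = ‖fderiv ℝ u x‖ := by
    intro x; exact LinearIsometryEquiv.norm_map _ _
  simp_rw [hgn]
  have hd : Differentiable ℝ u := hu.differentiable one_ne_zero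
  have hdc : Continuous (fderiv ℝ u) := hu.continuous_fderiv one_ne_zero
  have hdcs : HasCompactSupport (fderiv ℝ u) := hc.fderiv ℝ
  have hcu := hu.continuous
  let i : Fin N := ⟨0, hN⟩
  let f : EuclideanSpace ℝ (Fin N) →L[ℝ] ℝ := EuclideanSpace.proj i
  let e : EuclideanSpace ℝ (Fin N) := EuclideanSpace.single i 1
  have hfe : f e = 1 := by simp [f, e]
  have he : ‖e‖ = 1 := by simp [e]
  have hfn : ∀ x, |f x| ≤ ‖x‖ := fun x => by
    simpa [f] using PiLp.norm_apply_le x i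
  let g : EuclideanSpace ℝ (Fin N) → ℝ := fun x => ‖u x‖ ^ p
  have hg : ContDiff ℝ 1 g := hu.norm_rpow hp
  have hgc : HasCompactSupport g := by
    apply hc.comp_left (g := fun y : ℝ => ‖y‖ ^ p)
    simp [hp0.ne']
  have hgd : Continuous (fderiv ℝ g) := hg.continuous_fderiv one_ne_zero
  have hgdc : HasCompactSupport (fderiv ℝ g) := hgc.fderiv ℝ
  have hgd' : Continuous (fun x => fderiv ℝ g x e) := hgd.clm_apply continuous_const
  have hgdc' : HasCompactSupport (fun x => fderiv ℝ g x e) :=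
    hgdc.comp_left (g := fun L : EuclideanSpace ℝ (Fin N) →L[ℝ] ℝ => L e) (by simp)
  have hI2 : Integrable (fun x => f x * fderiv ℝ g x e) :=
    (f.continuous.mul hgd').integrable_of_hasCompactSupport hgdc'.mul_left
  have key := integral_mul_fderiv_eq_neg_fderiv_mul_of_integrable (μ := volume)
    (f := fun x => f x) (g := g) (v := e)
    (by
      simp only [ContinuousLinearMap.fderiv, hfe, one_mul]
      exact hg.continuous.integrable_of_hasCompactSupport hgc)
    hI2
    ((f.continuous.mul hg.continuous).integrable_of_hasCompactSupport hgc.mul_left)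
    (fun x _ => f.differentiableAt) (fun x _ => (hg.differentiable one_ne_zero) x)
  simp only [ContinuousLinearMap.fderiv, hfe, one_mul] at key
  have hP : ∫ x, |u x| ^ p = - ∫ x, f x * fderiv ℝ g x e := by
    rw [key, neg_neg]; rfl
  set P := ∫ x, |u x| ^ p with hPdef
  set G := ∫ x, ‖fderiv ℝ u x‖ ^ p with hGdef
  have hP0 : 0 ≤ P := integral_nonneg fun x => by positivity
  have hG0 : 0 ≤ G := integral_nonneg fun x => by positivity
  have hc1 : Continuous (fun x => |u x| ^ (p - 1)) := hcu.abs.rpow_const (fun _ => Or.inr hp1.le)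
  have hc1s : HasCompactSupport (fun x => |u x| ^ (p - 1)) :=
    hc.comp_left (g := fun y : ℝ => |y| ^ (p - 1)) (by simp [hp1.ne'])
  have hpt : ∀ x, |f x * fderiv ℝ g x e| ≤ (p * R) * (|u x| ^ (p - 1) * ‖fderiv ℝ u x‖) := by
    intro x
    have h1 : ‖fderiv ℝ g x‖ ≤ p * ‖u x‖ ^ (p - 1) * ‖fderiv ℝ u x‖ := norm_fderiv_norm_rpow_le hd hp
    have h2 : |fderiv ℝ g x e| ≤ ‖fderiv ℝ g x‖ := by
      simpa [he] using (fderiv ℝ g x).le_opNorm e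
    rw [Real.norm_eq_abs] at h1
    by_cases hx : u x = 0
    · simp only [hx, abs_zero, Real.zero_rpow hp1.ne', mul_zero, zero_mul] at h1 ⊢
      have : |fderiv ℝ g x e| = 0 := le_antisymm (h2.trans h1) (abs_nonneg _)
      rw [abs_mul, this, mul_zero]
    · rw [abs_mul]
      calc |f x| * |fderiv ℝ g x e| ≤ R * (p * |u x| ^ (p - 1) * ‖fderiv ℝ u x‖) :=
            mul_le_mul ((hfn x).trans (hs x hx)) (h2.trans h1) (abs_nonneg _) hR.le
        _ = _ := by ring
  have hI3 : Integrable (fun x => |u x| ^ (p - 1) * ‖fderiv ℝ u x‖) :=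
    (hc1.mul hdc.norm).integrable_of_hasCompactSupport hc1s.mul_right
  have hle : P ≤ (p * R) * ∫ x, |u x| ^ (p - 1) * ‖fderiv ℝ u x‖ := by
    rw [hP, ← integral_const_mul, ← integral_neg]
    refine integral_mono hI2.neg (hI3.const_mul _) fun x => ?_
    exact (neg_le_abs _).trans (hpt x)
  have hconj : (p / (p - 1)).HolderConjugate p := (Real.HolderConjugate.conjExponent hp).symm
  have hhol := aux_holder (μ := volume) _ _ hconj (fun x => |u x| ^ (p - 1)) (fun x => ‖fderiv ℝ u x‖)
    (fun x => by positivity) (fun x => by positivity)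
    (hc1.memLp_of_hasCompactSupport hc1s) (hdc.norm.memLp_of_hasCompactSupport hdcs.norm)
  have hsimp : ∀ x, (|u x| ^ (p - 1)) ^ (p / (p - 1)) = |u x| ^ p := by
    intro x
    rw [← Real.rpow_mul (abs_nonneg _), mul_div_cancel₀ _ hp1.ne']
  simp only [hsimp] at hhol
  rw [← hPdef, ← hGdef] at hhol
  rcases hP0.eq_or_lt with h0 | hPpos
  · rw [← h0]; positivity
  have h4 : P ≤ (p * R) * (P ^ (1 / (p / (p - 1))) * G ^ (1 / p)) :=
    hle.trans (mul_le_mul_of_nonneg_left hhol (by positivity))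
  have h5 : P = P ^ (1 / (p / (p - 1))) * P ^ (1 / p) := by
    rw [← Real.rpow_add hPpos]
    have : 1 / (p / (p - 1)) + 1 / p = 1 := by field_simp; ring
    rw [this, Real.rpow_one]
  have h6 : P ^ (1 / p) ≤ p * R * G ^ (1 / p) := by
    have h7 : 0 < P ^ (1 / (p / (p - 1))) := Real.rpow_pos_of_pos hPpos _
    refine le_of_mul_le_mul_left ?_ h7
    calc _ = P := h5.symm
      _ ≤ _ := h4
      _ = _ := by ring
  calc P = (P ^ (1 / p)) ^ p := by rw [← Real.rpow_mul hP0, one_div_mul_cancel hp0.ne', Real.rpow_one]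
    _ ≤ (p * R * G ^ (1 / p)) ^ p := Real.rpow_le_rpow (by positivity) h6 hp0.le
    _ = (p * R) ^ p * G := by
      rw [Real.mul_rpow (by positivity) (by positivity), ← Real.rpow_mul hG0,
        one_div_mul_cancel hp0.ne', Real.rpow_one]

lemma aux_interp {α : Type*} [MeasurableSpace α] {μ : Measure α} (p q γ : ℝ) (hp : 0 < p)
    (hpq : p < q) (hqγ : q < γ) (v : α → ℝ) (hv : ∀ x, 0 ≤ v x)
    (hm : ∀ r s : ℝ, 0 < r → 0 < s → MemLp (fun x => v x ^ r) (ENNReal.ofReal s) μ) :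
    (∫ x, v x ^ q ∂μ) ^ ((γ - p) / (γ - q)) ≤
      (∫ x, v x ^ p ∂μ) * (∫ x, v x ^ γ ∂μ) ^ ((q - p) / (γ - q)) := by
  have h1 : 0 < γ - q := by linarith
  have h2 : 0 < q - p := by linarith
  have h3 : 0 < γ - p := by linarith
  have hγ : 0 < γ := by linarith
  have hq : 0 < q := by linarith
  have hconj : ((γ - p) / (γ - q)).HolderConjugate ((γ - p) / (q - p)) := by
    rw [Real.holderConjugate_iff]
    constructor
    · rw [lt_div_iff₀ h1]; linarith
    · field_simp; ring
  have := aux_holder (μ := μ) _ _ hconj (fun x => v x ^ (p * ((γ - q) / (γ - p))))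
    (fun x => v x ^ (γ * ((q - p) / (γ - p)))) (fun x => Real.rpow_nonneg (hv x) _)
    (fun x => Real.rpow_nonneg (hv x) _) (hm _ _ (by positivity) (by positivity))
    (hm _ _ (by positivity) (by positivity))
  have e1 : ∀ x, v x ^ (p * ((γ - q) / (γ - p))) * v x ^ (γ * ((q - p) / (γ - p))) = v x ^ q := by
    intro x
    rw [← Real.rpow_add_of_nonneg (hv x) (by positivity) (by positivity)]
    congr 1; field_simp; ring
  have e2 : ∀ x, (v x ^ (p * ((γ - q) / (γ - p)))) ^ ((γ - p) / (γ - q)) = v x ^ p := by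
    intro x
    rw [← Real.rpow_mul (hv x)]
    congr 1; field_simp
  have e3 : ∀ x, (v x ^ (γ * ((q - p) / (γ - p)))) ^ ((γ - p) / (q - p)) = v x ^ γ := by
    intro x
    rw [← Real.rpow_mul (hv x)]
    congr 1; field_simp
  simp only [e1, e2, e3] at this
  have n1 : ∀ r : ℝ, 0 ≤ ∫ x, v x ^ r ∂μ := fun r =>
    integral_nonneg (fun x => by simpa using Real.rpow_nonneg (hv x) r)
  calc _ ≤ _ := Real.rpow_le_rpow (n1 q) this (by positivity : 0 ≤ (γ - p) / (γ - q))
    _ = _ := by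
      rw [Real.mul_rpow (Real.rpow_nonneg (n1 _) _) (Real.rpow_nonneg (n1 _) _),
        ← Real.rpow_mul (n1 _), ← Real.rpow_mul (n1 _)]
      have a1 : 1 / ((γ - p) / (γ - q)) * ((γ - p) / (γ - q)) = 1 := by field_simp
      have a2 : 1 / ((γ - p) / (q - p)) * ((γ - p) / (γ - q)) = (q - p) / (γ - q) := by field_simp
      rw [a1, a2, Real.rpow_one]

lemma aux_bump {N : ℕ} (Ω K : Set (EuclideanSpace ℝ (Fin N))) (hΩ : IsOpen Ω) (hK : IsCompact K)
    (hKΩ : K ⊆ Ω) : ∃ u : EuclideanSpace ℝ (Fin N) → ℝ, ContDiff ℝ (⊤ : ℕ∞) u ∧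
      HasCompactSupport u ∧ tsupport u ⊆ Ω ∧ ∀ x ∈ K, u x = 1 := by
  obtain ⟨L, hL, hKL, hLΩ⟩ := exists_compact_between hK hΩ hKΩ
  obtain ⟨u, h1, -, h3, h4⟩ := exists_contMDiff_support_eq_eq_one_iff
    (modelWithCornersSelf ℝ (EuclideanSpace ℝ (Fin N))) (n := (⊤ : ℕ∞)) isOpen_interior hK.isClosed hKL
  have hts : tsupport u ⊆ L := by
    rw [tsupport, h3]
    exact closure_minimal interior_subset hL.isClosed
  exact ⟨u, h1.contDiff, hL.of_isClosed_subset (isClosed_tsupport u) hts, hts.trans hLΩ,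
    fun x hx => (h4 x).1 hx⟩

/-- The nonlinear generalized Rayleigh quotient
`Υ(u) = (∫a|u|^q)^{(γ-p)/(γ-q)} / (∫‖∇u‖^p · (∫b|u|^γ)^{(q-p)/(γ-q)})`
has a finite positive supremum over the admissible set
`D = {u ∈ W₀^{1,p}(Ω) \ {0} : ∫a|u|^q > 0}` (here represented by smooth
compactly supported functions on `Ω`, which are dense in `W₀^{1,p}(Ω)`). -/
theorem stmt_14 {N : ℕ} (hN : 1 ≤ N) (p q γ σb : ℝ)
    (hp : 1 < p) (hpq : p < q) (hqγ : q < γ) (hσb : 0 < σb)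
    (hsub : p < N → γ < p * N / (N - p))
    (Ω : Set (EuclideanSpace ℝ (Fin N))) (hΩop : IsOpen Ω)
    (hΩbdd : Bornology.IsBounded Ω) (hΩne : Ω.Nonempty)
    (a b : EuclideanSpace ℝ (Fin N) → ℝ) (ahat bhat : ℝ)
    (hameas : Measurable a) (hbmeas : Measurable b)
    (ha : ∀ᵐ x ∂(volume.restrict Ω), 0 ≤ a x ∧ a x ≤ ahat)
    (hane : ¬ (a =ᵐ[volume.restrict Ω] 0))
    (hb : ∀ᵐ x ∂(volume.restrict Ω), σb ≤ b x ∧ b x ≤ bhat)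
    (S : Set ℝ)
    (hS : S = {r : ℝ | ∃ u : EuclideanSpace ℝ (Fin N) → ℝ,
      ContDiff ℝ (⊤ : ℕ∞) u ∧ HasCompactSupport u ∧ tsupport u ⊆ Ω ∧
      0 < ∫ x in Ω, a x * |u x| ^ q ∧
      0 < ∫ x in Ω, ‖gradient u x‖ ^ p ∧
      r = (∫ x in Ω, a x * |u x| ^ q) ^ ((γ - p) / (γ - q)) /
        ((∫ x in Ω, ‖gradient u x‖ ^ p) *
          (∫ x in Ω, b x * |u x| ^ γ) ^ ((q - p) / (γ - q)))}) :
    S.Nonempty ∧ BddAbove S ∧ 0 < sSup S := by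
  have hp0 : 0 < p := by linarith
  have hq0 : 0 < q := by linarith
  have hγ0 : 0 < γ := by linarith
  have h1 : 0 < γ - q := by linarith
  have h2 : 0 < q - p := by linarith
  have h3 : 0 < γ - p := by linarith
  have hs0 : 0 < (γ - p) / (γ - q) := by positivity
  have ht0 : 0 < (q - p) / (γ - q) := by positivity
  have hΩm : MeasurableSet Ω := hΩop.measurableSet
  obtain ⟨R, hR, hΩR⟩ : ∃ R : ℝ, 0 < R ∧ ∀ x ∈ Ω, ‖x‖ ≤ R := by
    obtain ⟨R, hR, h⟩ := hΩbdd.exists_pos_norm_le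
    exact ⟨R, hR, h⟩
  -- Poincare inequality on Ω
  have hpoin : ∀ u : EuclideanSpace ℝ (Fin N) → ℝ, ContDiff ℝ (⊤ : ℕ∞) u → HasCompactSupport u →
      tsupport u ⊆ Ω →
      ∫ x in Ω, |u x| ^ p ≤ (p * R) ^ p * ∫ x in Ω, ‖gradient u x‖ ^ p := by
    intro u hu hc hsu
    have hz : ∀ x, x ∉ Ω → u x = 0 := fun x hx => image_eq_zero_of_notMem_tsupport fun h => hx (hsu h)
    have hz' : ∀ x, x ∉ Ω → gradient u x = 0 := by
      intro x hx
      have : fderiv ℝ u x = 0 := by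
        have h := (tsupport_fderiv_subset ℝ (f := u)).trans hsu
        exact image_eq_zero_of_notMem_tsupport fun h' => hx (h h')
      simp [gradient, this]
    rw [setIntegral_eq_integral_of_forall_compl_eq_zero
        (fun x hx => by simp [hz x hx, hp0.ne']),
      setIntegral_eq_integral_of_forall_compl_eq_zero
        (fun x hx => by simp [hz' x hx, hp0.ne'])]
    refine aux_poincare hN p R hp hR u (hu.of_le (by simp)) hc fun x hx => hΩR x ?_
    by_contra h
    exact hx (hz x h)
  -- integrability
  have hmem : ∀ u : EuclideanSpace ℝ (Fin N) → ℝ, ContDiff ℝ (⊤ : ℕ∞) u → HasCompactSupport u →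
      ∀ r s : ℝ, 0 < r → 0 < s →
        MemLp (fun x => |u x| ^ r) (ENNReal.ofReal s) (volume.restrict Ω) := by
    intro u hu hc r s hr _
    have hcont : Continuous (fun x => |u x| ^ r) :=
      hu.continuous.abs.rpow_const (fun _ => Or.inr hr.le)
    exact hcont.memLp_of_hasCompactSupport
      (hc.comp_left (g := fun y : ℝ => |y| ^ r) (by simp [hr.ne']))
  have hint : ∀ u : EuclideanSpace ℝ (Fin N) → ℝ, ContDiff ℝ (⊤ : ℕ∞) u → HasCompactSupport u →
      ∀ r : ℝ, 0 < r → Integrable (fun x => |u x| ^ r) (volume.restrict Ω) := by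
    intro u hu hc r hr
    have := hmem u hu hc r 1 hr one_pos
    rwa [ENNReal.ofReal_one, memLp_one_iff_integrable] at this
  have hinta : ∀ u : EuclideanSpace ℝ (Fin N) → ℝ, ContDiff ℝ (⊤ : ℕ∞) u → HasCompactSupport u →
      Integrable (fun x => a x * |u x| ^ q) (volume.restrict Ω) := by
    intro u hu hc
    refine (hint u hu hc q hq0).bdd_mul (c := |ahat|) hameas.aestronglyMeasurable ?_
    filter_upwards [ha] with x hx
    rw [Real.norm_eq_abs, abs_of_nonneg hx.1]
    exact hx.2.trans (le_abs_self _)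
  have hintb : ∀ u : EuclideanSpace ℝ (Fin N) → ℝ, ContDiff ℝ (⊤ : ℕ∞) u → HasCompactSupport u →
      Integrable (fun x => b x * |u x| ^ γ) (volume.restrict Ω) := by
    intro u hu hc
    refine (hint u hu hc γ hγ0).bdd_mul (c := |bhat|) hbmeas.aestronglyMeasurable ?_
    filter_upwards [hb] with x hx
    rw [Real.norm_eq_abs, abs_of_nonneg (hσb.le.trans hx.1)]
    exact hx.2.trans (le_abs_self _)
  have hn : ∀ (u : EuclideanSpace ℝ (Fin N) → ℝ) (r : ℝ), 0 ≤ ∫ x in Ω, |u x| ^ r :=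
    fun u r => integral_nonneg fun x => by positivity
  have hA : ∀ u : EuclideanSpace ℝ (Fin N) → ℝ, ContDiff ℝ (⊤ : ℕ∞) u → HasCompactSupport u →
      ∫ x in Ω, a x * |u x| ^ q ≤ |ahat| * ∫ x in Ω, |u x| ^ q := by
    intro u hu hc
    rw [← integral_const_mul]
    refine integral_mono_ae (hinta u hu hc) ((hint u hu hc q hq0).const_mul _) ?_
    filter_upwards [ha] with x hx
    exact mul_le_mul_of_nonneg_right (hx.2.trans (le_abs_self _)) (by positivity)
  have hB : ∀ u : EuclideanSpace ℝ (Fin N) → ℝ, ContDiff ℝ (⊤ : ℕ∞) u → HasCompactSupport u →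
      σb * ∫ x in Ω, |u x| ^ γ ≤ ∫ x in Ω, b x * |u x| ^ γ := by
    intro u hu hc
    rw [← integral_const_mul]
    refine integral_mono_ae ((hint u hu hc γ hγ0).const_mul _) (hintb u hu hc) ?_
    filter_upwards [hb] with x hx
    exact mul_le_mul_of_nonneg_right hx.1 (by positivity)
  -- main estimate
  have hmain : ∀ u : EuclideanSpace ℝ (Fin N) → ℝ, ContDiff ℝ (⊤ : ℕ∞) u → HasCompactSupport u →
      tsupport u ⊆ Ω → 0 < ∫ x in Ω, a x * |u x| ^ q →
      (∫ x in Ω, a x * |u x| ^ q) ^ ((γ - p) / (γ - q)) ≤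
        (|ahat| ^ ((γ - p) / (γ - q)) * (p * R) ^ p * (σb⁻¹) ^ ((q - p) / (γ - q))) *
        ((∫ x in Ω, ‖gradient u x‖ ^ p) *
          (∫ x in Ω, b x * |u x| ^ γ) ^ ((q - p) / (γ - q))) := by
    intro u hu hc hsu hpos
    have i1 := aux_interp (μ := volume.restrict Ω) p q γ hp0 hpq hqγ (fun x => |u x|)
      (fun x => abs_nonneg _) (hmem u hu hc)
    have i2 := Real.rpow_le_rpow hpos.le (hA u hu hc) hs0.le
    rw [Real.mul_rpow (abs_nonneg _) (hn u q)] at i2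
    have i3 := hpoin u hu hc hsu
    have hbn : 0 ≤ ∫ x in Ω, b x * |u x| ^ γ :=
      (mul_nonneg hσb.le (hn u γ)).trans (hB u hu hc)
    have i4 : ∫ x in Ω, |u x| ^ γ ≤ σb⁻¹ * ∫ x in Ω, b x * |u x| ^ γ := by
      rw [inv_mul_eq_div, le_div_iff₀ hσb, mul_comm]
      exact hB u hu hc
    have i5 := Real.rpow_le_rpow (hn u γ) i4 ht0.le
    rw [Real.mul_rpow (by positivity) hbn] at i5
    have hgn : 0 ≤ ∫ x in Ω, ‖gradient u x‖ ^ p := integral_nonneg fun x => by positivity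
    calc _ ≤ _ := i2
      _ ≤ |ahat| ^ ((γ - p) / (γ - q)) * _ := mul_le_mul_of_nonneg_left i1 (by positivity)
      _ ≤ |ahat| ^ ((γ - p) / (γ - q)) * (((p * R) ^ p * ∫ x in Ω, ‖gradient u x‖ ^ p) * _) :=
        mul_le_mul_of_nonneg_left (mul_le_mul i3 i5 (Real.rpow_nonneg (hn u γ) _)
          (mul_nonneg (by positivity) hgn)) (by positivity)
      _ = _ := by ring
  have hbdd : BddAbove S := by
    refine ⟨|ahat| ^ ((γ - p) / (γ - q)) * (p * R) ^ p * (σb⁻¹) ^ ((q - p) / (γ - q)), ?_⟩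
    rintro r hr
    rw [hS] at hr
    obtain ⟨u, hu, hc, hsu, hpos, hgpos, rfl⟩ := hr
    have hbn : 0 ≤ ∫ x in Ω, b x * |u x| ^ γ :=
      (mul_nonneg hσb.le (hn u γ)).trans (hB u hu hc)
    exact div_le_of_le_mul₀ (mul_nonneg hgpos.le (Real.rpow_nonneg hbn _)) (by positivity)
      (hmain u hu hc hsu hpos)
  -- a positive element
  have hex : ∃ r ∈ S, 0 < r := by
    have hmeas : volume ({x | 0 < a x} ∩ Ω) ≠ 0 := by
      intro h0
      apply hane
      have : ∀ᵐ x ∂(volume.restrict Ω), ¬ 0 < a x := by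
        rw [ae_iff, Measure.restrict_apply' hΩm]
        simpa using h0
      filter_upwards [this, ha] with x hx hx'
      exact le_antisymm (not_lt.1 hx) hx'.1
    have hms : MeasurableSet ({x | 0 < a x} ∩ Ω) :=
      (measurableSet_lt measurable_const hameas).inter hΩm
    obtain ⟨K, hKs, hK, hKpos⟩ := hms.exists_lt_isCompact (pos_iff_ne_zero.2 hmeas)
    obtain ⟨u, hu, hc, hsu, hu1⟩ := aux_bump Ω K hΩop hK (fun x hx => (hKs hx).2)
    have hapos : 0 < ∫ x in Ω, a x * |u x| ^ q := by
      rw [integral_pos_iff_support_of_nonneg_ae _ (hinta u hu hc)]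
      · rw [Measure.restrict_apply' hΩm]
        refine hKpos.trans_le (measure_mono fun x hx => ⟨?_, (hKs hx).2⟩)
        have : 0 < a x := (hKs hx).1
        simp [hu1 x hx, this.ne']
      · filter_upwards [ha] with x hx
        exact mul_nonneg hx.1 (by positivity)
    have hgn : 0 ≤ ∫ x in Ω, ‖gradient u x‖ ^ p := integral_nonneg fun x => by positivity
    have hbn : 0 ≤ ∫ x in Ω, b x * |u x| ^ γ :=
      (mul_nonneg hσb.le (hn u γ)).trans (hB u hu hc)
    have hl := Real.rpow_pos_of_pos hapos ((γ - p) / (γ - q))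
    have hm := hmain u hu hc hsu hapos
    have hprod : 0 < (∫ x in Ω, ‖gradient u x‖ ^ p) *
          (∫ x in Ω, b x * |u x| ^ γ) ^ ((q - p) / (γ - q)) := by
      refine lt_of_le_of_ne (mul_nonneg hgn (Real.rpow_nonneg hbn _)) fun h => ?_
      rw [← h, mul_zero] at hm
      linarith
    have hgpos : 0 < ∫ x in Ω, ‖gradient u x‖ ^ p := by
      refine lt_of_le_of_ne hgn fun h => ?_
      rw [← h, zero_mul] at hprod
      exact lt_irrefl _ hprod
    refine ⟨_, ?_, div_pos hl hprod⟩
    rw [hS]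
    exact ⟨u, hu, hc, hsu, hapos, hgpos, rfl⟩
  obtain ⟨r, hr, hrpos⟩ := hex
  exact ⟨⟨r, hr⟩, hbdd, hrpos.trans_le (le_csSup hbdd hr)⟩
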